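/- Let (pₕ)ₕ be a sequence in L^{r'}(Ω) with zero mean, p ∈ L^{r'}(Ω) with zero mean, r' ∈ (1,∞), and suppose (i) ‖pₕ‖_{L^{r'}} is bounded uniformly, and (ii) ∫_Ω (|pₕ|^{r'−2} pₕ − |p|^{r'−2} p)(pₕ − p) → 0. Then pₕ → p strongly in L^{r'}(Ω). -/

import Mathlib

open Real MeasureTheory Filter
open scoped RealInnerProductSpace Topology

/-!
Write `J a = ‖a‖ ^ (ρ - 2) • a`. Splitting `⟪J a - J b, a - b⟫` into a radial and an angular part
gives the strong monotonicity `(‖a‖ + ‖b‖) ^ (ρ - 2) * ‖a - b‖ ^ 2 ≤ C * ⟪J a - J b, a - b⟫`.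
Where `‖b‖` is at most a fixed multiple of `‖a - b‖`, the sum `‖a‖ + ‖b‖` is comparable to
`‖a - b‖`, so the left side controls `‖a - b‖ ^ ρ`; elsewhere `‖a - b‖ ^ ρ ≤ ε * ‖b‖ ^ ρ`. Hence
`‖a - b‖ ^ ρ ≤ ε * ‖b‖ ^ ρ + K * ⟪J a - J b, a - b⟫` with `K` depending only on `ε` and `ρ`, and it
remains to integrate. The small term involves `b` alone, the limit in the application, so it stays
fixed along the family.
-/

section RealPower

variable {ρ r s : ℝ}

lemma rpow_sub_two_mul_sq (hρ : ρ ≠ 0) (hr : 0 ≤ r) : r ^ (ρ - 2) * r ^ 2 = r ^ ρ := by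
  rw [← rpow_add_natCast' hr (by simpa using hρ)]
  simp

lemma exists_mul_rpow_le_rpow {T : ℝ} (hT : 0 < T) (σ : ℝ) :
    ∃ c > 0, ∀ x y : ℝ, 0 < x → x ≤ y → y ≤ T * x → c * x ^ σ ≤ y ^ σ := by
  rcases le_total 0 σ with hσ | hσ
  · refine ⟨1, one_pos, fun x y hx hxy _ ↦ ?_⟩
    rw [one_mul]
    exact rpow_le_rpow hx.le hxy hσ
  · refine ⟨T ^ σ, rpow_pos_of_pos hT σ, fun x y hx hxy hyx ↦ ?_⟩
    rw [← mul_rpow hT.le hx.le]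
    exact rpow_le_rpow_of_nonpos (hx.trans_le hxy) hyx hσ

lemma add_rpow_le_two_rpow_mul_add {σ : ℝ} (hσ : 0 ≤ σ) (hr : 0 ≤ r) (hs : 0 ≤ s) :
    (r + s) ^ σ ≤ 2 ^ σ * (r ^ σ + s ^ σ) := by
  wlog hsr : s ≤ r generalizing r s
  · rw [add_comm r, add_comm (r ^ σ)]
    exact this hs hr (le_of_not_ge hsr)
  calc (r + s) ^ σ ≤ (2 * r) ^ σ := by gcongr; linarith
    _ = 2 ^ σ * r ^ σ := mul_rpow two_pos.le hr
    _ ≤ 2 ^ σ * (r ^ σ + s ^ σ) := by gcongr; exact le_add_of_nonneg_right (by positivity)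

lemma mul_rpow_sub_two_mul_sub_le (hρ₁ : 1 ≤ ρ) (hρ₂ : ρ ≤ 2) (hr : 0 < r) (hs : 0 < s) :
    (ρ - 1) * r ^ (ρ - 2) * (r - s) ≤ r ^ (ρ - 2) * r - s ^ (ρ - 2) * s := by
  have amgm : s ^ (ρ - 1) * r ^ (2 - ρ) ≤ (ρ - 1) * s + (2 - ρ) * r :=
    geom_mean_le_arith_mean2_weighted (by linarith) (by linarith) hs.le hr.le (by ring)
  have tangent : s ^ (ρ - 2) * s ≤ r ^ (ρ - 2) * ((ρ - 1) * s + (2 - ρ) * r) :=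
    calc s ^ (ρ - 2) * s = s ^ (ρ - 1) := by
          rw [← rpow_add_one hs.ne']; ring_nf
      _ = r ^ (ρ - 2) * (s ^ (ρ - 1) * r ^ (2 - ρ)) := by
          rw [mul_left_comm, ← rpow_add hr, sub_add_sub_cancel, sub_self, rpow_zero, mul_one]
      _ ≤ _ := by gcongr
  linarith

end RealPower

section PowerFramed

variable {E : Type*} [NormedAddCommGroup E] [InnerProductSpace ℝ E]

/-- The `ρ`-power-framed function `a ↦ ‖a‖ ^ (ρ - 2) a`, for `ρ > 1` the gradient of
`a ↦ ‖a‖ ^ ρ / ρ`. Its value at `0` is `0`, whatever the junk value of `0 ^ (ρ - 2)`. -/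
noncomputable def powerFramed (ρ : ℝ) (a : E) : E := ‖a‖ ^ (ρ - 2) • a

variable {ρ : ℝ}

lemma norm_powerFramed (hρ : ρ ≠ 1) (a : E) : ‖powerFramed ρ a‖ = ‖a‖ ^ (ρ - 1) := by
  rw [powerFramed, norm_smul, norm_of_nonneg (by positivity),
    ← rpow_add_one' (norm_nonneg a) (by contrapose! hρ; linarith)]
  ring_nf

lemma inner_powerFramed_sub_powerFramed (ρ : ℝ) (a b : E) :
    ⟪powerFramed ρ a - powerFramed ρ b, a - b⟫ =
      (‖a‖ ^ (ρ - 2) * ‖a‖ - ‖b‖ ^ (ρ - 2) * ‖b‖) * (‖a‖ - ‖b‖) +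
        (‖a‖ ^ (ρ - 2) + ‖b‖ ^ (ρ - 2)) * (‖a‖ * ‖b‖ - ⟪a, b⟫) := by
  simp only [powerFramed, inner_sub_left, inner_sub_right, real_inner_smul_left,
    real_inner_self_eq_norm_sq, real_inner_comm a b]
  ring

lemma mul_norm_sub_sq_le_inner_powerFramed {a b : E} {m : ℝ}
    (hradial : m * (‖a‖ - ‖b‖) ^ 2 ≤
      (‖a‖ ^ (ρ - 2) * ‖a‖ - ‖b‖ ^ (ρ - 2) * ‖b‖) * (‖a‖ - ‖b‖))
    (hangular : 2 * m ≤ ‖a‖ ^ (ρ - 2) + ‖b‖ ^ (ρ - 2)) :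
    m * ‖a - b‖ ^ 2 ≤ ⟪powerFramed ρ a - powerFramed ρ b, a - b⟫ := by
  have cauchySchwarz : 0 ≤ ‖a‖ * ‖b‖ - ⟪a, b⟫ := sub_nonneg.2 (real_inner_le_norm a b)
  calc m * ‖a - b‖ ^ 2 = m * (‖a‖ - ‖b‖) ^ 2 + 2 * m * (‖a‖ * ‖b‖ - ⟪a, b⟫) := by
        rw [norm_sub_sq_real]; ring
    _ ≤ _ := add_le_add hradial (mul_le_mul_of_nonneg_right hangular cauchySchwarz)
    _ = _ := (inner_powerFramed_sub_powerFramed ρ a b).symm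

lemma rpow_mul_norm_sub_sq_le_of_two_le (hρ : 2 ≤ ρ) (a b : E) :
    (‖a‖ + ‖b‖) ^ (ρ - 2) * ‖a - b‖ ^ 2 ≤
      2 ^ (ρ - 1) * ⟪powerFramed ρ a - powerFramed ρ b, a - b⟫ := by
  have hσ : 0 ≤ ρ - 2 := sub_nonneg.2 hρ
  set p := ‖a‖ ^ (ρ - 2)
  set q := ‖b‖ ^ (ρ - 2)
  have hmono : 0 ≤ (p - q) * (‖a‖ - ‖b‖) := by
    rcases le_total ‖a‖ ‖b‖ with h | h
    · exact mul_nonneg_of_nonpos_of_nonpos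
        (sub_nonpos.2 (rpow_le_rpow (norm_nonneg a) h hσ)) (sub_nonpos.2 h)
    · exact mul_nonneg (sub_nonneg.2 (rpow_le_rpow (norm_nonneg b) h hσ)) (sub_nonneg.2 h)
  have hradial : (p + q) / 2 * (‖a‖ - ‖b‖) ^ 2 ≤ (p * ‖a‖ - q * ‖b‖) * (‖a‖ - ‖b‖) := by
    linear_combination (‖a‖ + ‖b‖) / 2 * hmono
  calc (‖a‖ + ‖b‖) ^ (ρ - 2) * ‖a - b‖ ^ 2
      ≤ 2 ^ (ρ - 2) * (p + q) * ‖a - b‖ ^ 2 := by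
        gcongr
        exact add_rpow_le_two_rpow_mul_add hσ (norm_nonneg a) (norm_nonneg b)
    _ = 2 ^ (ρ - 1) * ((p + q) / 2 * ‖a - b‖ ^ 2) := by
        rw [show ρ - 1 = ρ - 2 + 1 by ring, rpow_add_one two_ne_zero]; ring
    _ ≤ _ := by
        gcongr
        exact mul_norm_sub_sq_le_inner_powerFramed hradial (by linarith)

lemma rpow_mul_norm_sub_sq_le_of_le_two (hρ₁ : 1 ≤ ρ) (hρ₂ : ρ ≤ 2) (a b : E) :
    (ρ - 1) * (‖a‖ + ‖b‖) ^ (ρ - 2) * ‖a - b‖ ^ 2 ≤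
      ⟪powerFramed ρ a - powerFramed ρ b, a - b⟫ := by
  wlog hba : ‖b‖ ≤ ‖a‖ generalizing a b
  · rw [add_comm ‖a‖, norm_sub_rev, ← inner_neg_neg, neg_sub, neg_sub]
    exact this b a (le_of_not_ge hba)
  rcases eq_or_ne b 0 with rfl | hb
  · have : 0 ≤ ‖a‖ ^ (ρ - 2) * ‖a‖ ^ 2 := by positivity
    simp only [powerFramed, norm_zero, add_zero, sub_zero, smul_zero, real_inner_smul_left,
      real_inner_self_eq_norm_sq]
    nlinarith
  have hb : 0 < ‖b‖ := norm_pos_iff.2 hb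
  have ha : 0 < ‖a‖ := hb.trans_le hba
  have hσ : ρ - 2 ≤ 0 := sub_nonpos.2 hρ₂
  set m := (‖a‖ + ‖b‖) ^ (ρ - 2)
  have hmp : m ≤ ‖a‖ ^ (ρ - 2) := rpow_le_rpow_of_nonpos ha (by linarith) hσ
  have hmq : m ≤ ‖b‖ ^ (ρ - 2) := rpow_le_rpow_of_nonpos hb (by linarith) hσ
  have hm : (ρ - 1) * m ≤ m := mul_le_of_le_one_left (by positivity) (by linarith)
  refine mul_norm_sub_sq_le_inner_powerFramed ?_ (by linarith)
  have hd : 0 ≤ ‖a‖ - ‖b‖ := sub_nonneg.2 hba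
  calc (ρ - 1) * m * (‖a‖ - ‖b‖) ^ 2
      ≤ (ρ - 1) * ‖a‖ ^ (ρ - 2) * (‖a‖ - ‖b‖) ^ 2 := by
        have : 0 ≤ ρ - 1 := sub_nonneg.2 hρ₁
        gcongr
    _ = (ρ - 1) * ‖a‖ ^ (ρ - 2) * (‖a‖ - ‖b‖) * (‖a‖ - ‖b‖) := by ring
    _ ≤ _ := mul_le_mul_of_nonneg_right (mul_rpow_sub_two_mul_sub_le hρ₁ hρ₂ ha hb) hd

theorem exists_rpow_mul_norm_sub_sq_le (hρ : 1 < ρ) :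
    ∃ C > 0, ∀ a b : E, (‖a‖ + ‖b‖) ^ (ρ - 2) * ‖a - b‖ ^ 2 ≤
      C * ⟪powerFramed ρ a - powerFramed ρ b, a - b⟫ := by
  rcases le_total 2 ρ with hρ₂ | hρ₂
  · exact ⟨2 ^ (ρ - 1), by positivity, rpow_mul_norm_sub_sq_le_of_two_le hρ₂⟩
  · have hρ₁ : 0 < ρ - 1 := sub_pos.2 hρ
    refine ⟨(ρ - 1)⁻¹, inv_pos.2 hρ₁, fun a b ↦ ?_⟩
    rw [le_inv_mul_iff₀ hρ₁, ← mul_assoc]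
    exact rpow_mul_norm_sub_sq_le_of_le_two hρ.le hρ₂ a b

lemma inner_powerFramed_sub_nonneg (hρ : 1 < ρ) (a b : E) :
    0 ≤ ⟪powerFramed ρ a - powerFramed ρ b, a - b⟫ := by
  obtain ⟨C, hC, h⟩ := exists_rpow_mul_norm_sub_sq_le (E := E) hρ
  exact nonneg_of_mul_nonneg_right (le_trans (by positivity) (h a b)) hC

lemma exists_norm_sub_rpow_le_of_norm_le (hρ : 1 < ρ) {T : ℝ} (hT : 0 < T) :
    ∃ K > 0, ∀ a b : E, ‖b‖ ≤ T * ‖a - b‖ →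
      ‖a - b‖ ^ ρ ≤ K * ⟪powerFramed ρ a - powerFramed ρ b, a - b⟫ := by
  obtain ⟨C, hC, hmono⟩ := exists_rpow_mul_norm_sub_sq_le (E := E) hρ
  obtain ⟨c, hc, hcomparable⟩ := exists_mul_rpow_le_rpow (T := 1 + 2 * T) (by positivity) (ρ - 2)
  refine ⟨c⁻¹ * C, by positivity, fun a b hb ↦ ?_⟩
  rcases eq_or_ne a b with rfl | hab
  · simp [zero_rpow (by linarith : ρ ≠ 0)]
  rw [mul_assoc, le_inv_mul_iff₀ hc]
  have hsum : ‖a‖ + ‖b‖ ≤ (1 + 2 * T) * ‖a - b‖ := by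
    linarith [norm_le_norm_sub_add a b]
  calc c * ‖a - b‖ ^ ρ = c * ‖a - b‖ ^ (ρ - 2) * ‖a - b‖ ^ 2 := by
        rw [mul_assoc, rpow_sub_two_mul_sq (by linarith) (norm_nonneg _)]
    _ ≤ (‖a‖ + ‖b‖) ^ (ρ - 2) * ‖a - b‖ ^ 2 := by
        gcongr
        exact hcomparable _ _ (norm_sub_pos_iff.2 hab) (norm_sub_le a b) hsum
    _ ≤ _ := hmono a b

theorem exists_norm_sub_rpow_le (hρ : 1 < ρ) {ε : ℝ} (hε : 0 < ε) :
    ∃ K, ∀ a b : E, ‖a - b‖ ^ ρ ≤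
      ε * ‖b‖ ^ ρ + K * ⟪powerFramed ρ a - powerFramed ρ b, a - b⟫ := by
  have hρ₀ : 0 < ρ := by linarith
  set δ := ε ^ ρ⁻¹
  have hδ : 0 < δ := rpow_pos_of_pos hε _
  have hδρ : δ ^ ρ = ε := rpow_inv_rpow hε.le hρ₀.ne'
  obtain ⟨K, hK, hfar⟩ := exists_norm_sub_rpow_le_of_norm_le (E := E) hρ (inv_pos.2 hδ)
  refine ⟨K, fun a b ↦ ?_⟩
  rcases le_total ‖b‖ (δ⁻¹ * ‖a - b‖) with h | h
  · exact le_add_of_nonneg_of_le (by positivity) (hfar a b h)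
  · refine le_add_of_le_of_nonneg ?_ (mul_nonneg hK.le (inner_powerFramed_sub_nonneg hρ a b))
    rw [← hδρ, ← mul_rpow hδ.le (norm_nonneg b)]
    exact rpow_le_rpow (norm_nonneg _) ((inv_mul_le_iff₀ hδ).1 h) hρ₀.le

lemma abs_inner_powerFramed_sub_le (hρ : 1 < ρ) (a b : E) :
    |⟪powerFramed ρ a - powerFramed ρ b, a - b⟫| ≤ 4 * (‖a‖ ^ ρ + ‖b‖ ^ ρ) := by
  wlog hba : ‖b‖ ≤ ‖a‖ generalizing a b
  · rw [add_comm (‖a‖ ^ ρ), ← inner_neg_neg, neg_sub, neg_sub]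
    exact this b a (le_of_not_ge hba)
  have hpowerFramed : ‖powerFramed ρ a - powerFramed ρ b‖ ≤ 2 * ‖a‖ ^ (ρ - 1) :=
    calc _ ≤ ‖a‖ ^ (ρ - 1) + ‖b‖ ^ (ρ - 1) := by
          simpa only [norm_powerFramed hρ.ne'] using
            norm_sub_le (powerFramed ρ a) (powerFramed ρ b)
      _ ≤ ‖a‖ ^ (ρ - 1) + ‖a‖ ^ (ρ - 1) := by gcongr
      _ = _ := (two_mul _).symm
  calc _ ≤ ‖powerFramed ρ a - powerFramed ρ b‖ * ‖a - b‖ := abs_real_inner_le_norm _ _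
    _ ≤ 2 * ‖a‖ ^ (ρ - 1) * (2 * ‖a‖) := by
        gcongr
        linarith [norm_sub_le a b]
    _ = 4 * ‖a‖ ^ ρ := by
        rw [← sub_add_cancel ρ 1, rpow_add_one' (norm_nonneg a) (by linarith), sub_add_cancel]
        ring
    _ ≤ 4 * (‖a‖ ^ ρ + ‖b‖ ^ ρ) := by gcongr; exact le_add_of_nonneg_right (by positivity)

end PowerFramed

section Lp

variable {α E : Type*} [MeasurableSpace α] {μ : Measure α} [NormedAddCommGroup E] {ρ : ℝ}

lemma integrable_norm_rpow_Lp (hρ : 0 < ρ) (f : Lp E (ENNReal.ofReal ρ) μ) :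
    Integrable (fun x ↦ ‖f x‖ ^ ρ) μ := by
  simpa only [ENNReal.toReal_ofReal hρ.le] using
    (Lp.memLp f).integrable_norm_rpow (ENNReal.ofReal_pos.2 hρ).ne' ENNReal.ofReal_ne_top

lemma norm_rpow_eq_integral_Lp (hρ : 0 < ρ) (f : Lp E (ENNReal.ofReal ρ) μ) :
    ‖f‖ ^ ρ = ∫ x, ‖f x‖ ^ ρ ∂μ := by
  have hnonneg : 0 ≤ ∫ x, ‖f x‖ ^ ρ ∂μ := by positivity
  rw [Lp.norm_def, toReal_eLpNorm (Lp.aestronglyMeasurable f),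
    lpNorm_eq_integral_norm_rpow_toReal (ENNReal.ofReal_pos.2 hρ).ne' ENNReal.ofReal_ne_top
      (Lp.aestronglyMeasurable f), ENNReal.toReal_ofReal hρ.le, rpow_inv_rpow hnonneg hρ.ne']

variable [InnerProductSpace ℝ E]

lemma aestronglyMeasurable_powerFramed {f : α → E} (hf : AEStronglyMeasurable f μ) :
    AEStronglyMeasurable (fun x ↦ powerFramed ρ (f x)) μ :=
  (hf.norm.aemeasurable.pow_const _).aestronglyMeasurable.smul hf

lemma integrable_inner_powerFramed_sub (hρ : 1 < ρ) (f g : Lp E (ENNReal.ofReal ρ) μ) :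
    Integrable (fun x ↦ ⟪powerFramed ρ (f x) - powerFramed ρ (g x), f x - g x⟫) μ := by
  have hf := Lp.aestronglyMeasurable f
  have hg := Lp.aestronglyMeasurable g
  have hρ₀ : 0 < ρ := by linarith
  refine (((integrable_norm_rpow_Lp hρ₀ f).add (integrable_norm_rpow_Lp hρ₀ g)).const_mul 4).mono'
    (((aestronglyMeasurable_powerFramed hf).sub (aestronglyMeasurable_powerFramed hg)).inner
      (hf.sub hg)) (.of_forall fun x ↦ ?_)
  exact abs_inner_powerFramed_sub_le hρ (f x) (g x)

theorem exists_Lp_norm_sub_rpow_le (hρ : 1 < ρ) {ε : ℝ} (hε : 0 < ε) :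
    ∃ K, ∀ f g : Lp E (ENNReal.ofReal ρ) μ, ‖f - g‖ ^ ρ ≤
      ε * ‖g‖ ^ ρ + K * ∫ x, ⟪powerFramed ρ (f x) - powerFramed ρ (g x), f x - g x⟫ ∂μ := by
  have hρ₀ : 0 < ρ := by linarith
  obtain ⟨K, hK⟩ := exists_norm_sub_rpow_le (E := E) hρ hε
  refine ⟨K, fun f g ↦ ?_⟩
  have hg := (integrable_norm_rpow_Lp hρ₀ g).const_mul ε
  have hfg := (integrable_inner_powerFramed_sub hρ f g).const_mul K
  rw [norm_rpow_eq_integral_Lp hρ₀ (f - g), norm_rpow_eq_integral_Lp hρ₀ g,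
    ← integral_const_mul, ← integral_const_mul, ← integral_add hg hfg]
  refine integral_mono_ae (integrable_norm_rpow_Lp hρ₀ (f - g)) (hg.add hfg) ?_
  filter_upwards [Lp.coeFn_sub f g] with x hx
  rw [hx]
  exact hK (f x) (g x)

theorem pressure_strong_convergence_general {ι : Type*} {l : Filter ι} (hρ : 1 < ρ)
    {u : ι → Lp E (ENNReal.ofReal ρ) μ} {v : Lp E (ENNReal.ofReal ρ) μ}
    (hconv : Tendsto
      (fun i ↦ ∫ x, ⟪powerFramed ρ (u i x) - powerFramed ρ (v x), u i x - v x⟫ ∂μ) l (𝓝 0)) :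
    Tendsto (fun i ↦ ‖u i - v‖) l (𝓝 0) := by
  have hρ₀ : 0 < ρ := by linarith
  have : Fact (1 ≤ ENNReal.ofReal ρ) := ⟨ENNReal.one_le_ofReal.2 hρ.le⟩
  have hpow : Tendsto (fun i ↦ ‖u i - v‖ ^ ρ) l (𝓝 0) := by
    refine tendsto_order.2 ⟨fun η hη ↦ .of_forall fun i ↦ hη.trans_le ?_, fun η hη ↦ ?_⟩
    · exact rpow_nonneg (norm_nonneg _) ρ
    obtain ⟨ε, hε, hεη⟩ := exists_pos_mul_lt hη (‖v‖ ^ ρ)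
    obtain ⟨K, hK⟩ := exists_Lp_norm_sub_rpow_le (E := E) (μ := μ) hρ hε
    have hlim := (hconv.const_mul K).const_add (ε * ‖v‖ ^ ρ)
    rw [mul_zero, add_zero, mul_comm] at hlim
    filter_upwards [hlim.eventually_lt_const hεη] with i hi
    linarith [hK (u i) v]
  have hroot := hpow.rpow_const (.inr (inv_nonneg.2 hρ₀.le))
  rw [zero_rpow (inv_ne_zero hρ₀.ne')] at hroot
  exact hroot.congr fun i ↦ rpow_rpow_inv (norm_nonneg _) hρ₀.ne'

end Lp

/-- Step 4 of the convergence proof: a bounded sequence `(pₕ)` in `L^{r'}(Ω)` with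
zero mean converging to a zero-mean `p` in the sense that
`∫ (|pₕ|^{r'−2} pₕ − |p|^{r'−2} p)(pₕ − p) → 0` converges strongly in `L^{r'}(Ω)`. -/
theorem pressure_strong_convergence
    (d : ℕ) (Ω : Set (EuclideanSpace ℝ (Fin d))) (ρ : ℝ) (hρ : 1 < ρ)
    (P : ℕ → Lp ℝ (ENNReal.ofReal ρ) (volume.restrict Ω))
    (p : Lp ℝ (ENNReal.ofReal ρ) (volume.restrict Ω))
    (hmean : ∀ n, ∫ x, (P n : EuclideanSpace ℝ (Fin d) → ℝ) x ∂(volume.restrict Ω) = 0)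
    (hmeanp : ∫ x, (p : EuclideanSpace ℝ (Fin d) → ℝ) x ∂(volume.restrict Ω) = 0)
    (hbd : ∃ C : ℝ, ∀ n, ‖P n‖ ≤ C)
    (hconv : Tendsto (fun n => ∫ x,
        (|(P n : EuclideanSpace ℝ (Fin d) → ℝ) x| ^ (ρ - 2) *
            (P n : EuclideanSpace ℝ (Fin d) → ℝ) x -
          |(p : EuclideanSpace ℝ (Fin d) → ℝ) x| ^ (ρ - 2) *
            (p : EuclideanSpace ℝ (Fin d) → ℝ) x) *
          ((P n : EuclideanSpace ℝ (Fin d) → ℝ) x -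
            (p : EuclideanSpace ℝ (Fin d) → ℝ) x) ∂(volume.restrict Ω))
      atTop (nhds 0)) :
    Tendsto (fun n => ‖P n - p‖) atTop (nhds 0) := by
  refine pressure_strong_convergence_general hρ ?_
  simpa only [powerFramed, inner_apply, norm_eq_abs, smul_eq_mul] using hconv
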